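/- arXiv:2501.10896 — 2 statements merged into one kernel-verified Lean document; each statement's English description precedes it below -/
import Mathlib

section
/- Let W(y|x,s,j) be a state-dependent AVC over finite alphabets with fixed state distribution Q_S, and suppose the graph of the averaged channel Q_{Y|XJ}(y|x,j) = Σ_s Q_S(s)W(y|x,s,j) is complete-𝒳 (no pair of inputs is isolated). Then for every (n,R) code with at least two messages, max_{j^n∈𝒥^n, m∈ℳ} e(m,j^n) ≥ 1/2, where e(m,j^n) = Σ_{y^n∉g^{−1}(m)} Σ_{s^n} Q_S^n(s^n) Π_{i=1}^n W(y_i|x_i(m),s_i,j_i). -/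
open scoped BigOperators

noncomputable section

section Common

variable {Ω α β γ : Type*}

/-- Shannon entropy (in bits) of a finitely supported distribution. -/
def Hent [Fintype α] (p : α → ℝ) : ℝ := -∑ a, p a * Real.logb 2 (p a)

/-- Marginal (pushforward) of a joint law `p` along the map `f`. -/
def marg [Fintype Ω] [DecidableEq α] (p : Ω → ℝ) (f : Ω → α) : α → ℝ :=
  fun a => ∑ ω, if f ω = a then p ω else 0

/-- Entropy of the marginal of `p` along `f`. -/
def Hm [Fintype Ω] [Fintype α] [DecidableEq α] (p : Ω → ℝ) (f : Ω → α) : ℝ :=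
  Hent (marg p f)

/-- Mutual information `I(f;g)` under the joint law `p`. -/
def mInfo [Fintype Ω] [Fintype α] [Fintype β] [DecidableEq α] [DecidableEq β]
    (p : Ω → ℝ) (f : Ω → α) (g : Ω → β) : ℝ :=
  Hm p f + Hm p g - Hm p fun ω => (f ω, g ω)

/-- Conditional mutual information `I(f;g∣h)` under the joint law `p`. -/
def cmInfo [Fintype Ω] [Fintype α] [Fintype β] [Fintype γ]
    [DecidableEq α] [DecidableEq β] [DecidableEq γ]
    (p : Ω → ℝ) (f : Ω → α) (g : Ω → β) (h : Ω → γ) : ℝ :=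
  (Hm p fun ω => (f ω, h ω)) + (Hm p fun ω => (g ω, h ω)) - Hm p h -
    Hm p fun ω => (f ω, g ω, h ω)

/-- Conditional entropy `H(f ∣ g)` under the joint law `p`. -/
def cHent [Fintype Ω] [Fintype α] [Fintype β] [DecidableEq α] [DecidableEq β]
    (p : Ω → ℝ) (f : Ω → α) (g : Ω → β) : ℝ :=
  (Hm p fun ω => (f ω, g ω)) - Hm p g

/-- `p` is a probability mass function on the finite type `α`. -/
def IsPMF [Fintype α] (p : α → ℝ) : Prop := (∀ a, 0 ≤ p a) ∧ ∑ a, p a = 1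

/-- `K` is a stochastic matrix (kernel) from `α` to `β`. -/
def IsKernel [Fintype β] (K : α → β → ℝ) : Prop := ∀ a, IsPMF (K a)

/-- The type of probability mass functions on `α`. -/
abbrev PMFt (α : Type*) [Fintype α] := {p : α → ℝ // IsPMF p}

/-- The type of stochastic matrices from `α` to `β`. -/
abbrev Kernelt (α β : Type*) [Fintype β] := {K : α → β → ℝ // IsKernel K}

/-- Kullback–Leibler divergence (in bits). -/
def KLdiv [Fintype α] (p q : α → ℝ) : ℝ := ∑ a, p a * Real.logb 2 (p a / q a)

/-- Empirical distribution (type) of a sequence. -/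
def emp {n : ℕ} [DecidableEq α] (x : Fin n → α) : α → ℝ :=
  fun a => (n : ℝ)⁻¹ * ∑ i, if x i = a then 1 else 0

end Common

/-- Product of sums over a finite index as a sum over functions. -/
theorem aux_prod_sum {n : ℕ} {A : Type*} [Fintype A] (f : Fin n → A → ℝ) :
    ∏ i, ∑ a, f i a = ∑ h : Fin n → A, ∏ i, f i (h i) := by
  classical
  rw [Finset.prod_univ_sum, Fintype.piFinset_univ]

theorem aux_isCompact {J : Type*} [Fintype J] : IsCompact {p : J → ℝ | IsPMF p} := by
  have : {p : J → ℝ | IsPMF p} = stdSimplex ℝ J := by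
    ext p; simp [IsPMF, stdSimplex]
  rw [this]; exact isCompact_stdSimplex ℝ J

theorem aux_exists {J Y : Type*} [Fintype J] [Nonempty J] [Fintype Y]
    (A B : J → Y → ℝ)
    (h : ¬ (0 < ⨅ qq : PMFt J × PMFt J,
            ∑ y, |∑ j, A j y * qq.1.1 j - ∑ j, B j y * qq.2.1 j|)) :
    ∃ q : PMFt J × PMFt J, ∀ y, ∑ j, A j y * q.1.1 j = ∑ j, B j y * q.2.1 j := by
  classical
  have : CompactSpace (PMFt J) := isCompact_iff_compactSpace.mp aux_isCompact
  have : Nonempty (PMFt J) := by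
    obtain ⟨j₀⟩ := (inferInstance : Nonempty J)
    refine ⟨⟨fun j => if j = j₀ then 1 else 0, fun a => ?_, by simp⟩⟩
    dsimp only
    split_ifs <;> norm_num
  let F : PMFt J × PMFt J → ℝ := fun qq =>
    ∑ y, |∑ j, A j y * qq.1.1 j - ∑ j, B j y * qq.2.1 j|
  have hF : Continuous F := by
    have h1 : ∀ j, Continuous fun qq : PMFt J × PMFt J => qq.1.1 j := fun j =>
      (continuous_apply j).comp (continuous_subtype_val.comp continuous_fst)
    have h2 : ∀ j, Continuous fun qq : PMFt J × PMFt J => qq.2.1 j := fun j =>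
      (continuous_apply j).comp (continuous_subtype_val.comp continuous_snd)
    refine continuous_finsetSum _ fun y _ => Continuous.abs (Continuous.sub ?_ ?_)
    · exact continuous_finsetSum _ fun j _ => continuous_const.mul (h1 j)
    · exact continuous_finsetSum _ fun j _ => continuous_const.mul (h2 j)
  obtain ⟨q, -, hq⟩ := isCompact_univ.exists_isMinOn Set.univ_nonempty hF.continuousOn
  have hle : F q ≤ ⨅ qq, F qq := le_ciInf fun qq => hq (Set.mem_univ qq)
  have h0 : F q ≤ 0 := hle.trans (not_lt.mp h)
  have h1 : F q = 0 := le_antisymm h0 (Finset.sum_nonneg fun _ _ => abs_nonneg _)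
  refine ⟨q, fun y => ?_⟩
  have := (Finset.sum_eq_zero_iff_of_nonneg (fun _ _ => abs_nonneg _)).mp h1 y (Finset.mem_univ y)
  exact sub_eq_zero.mp (abs_eq_zero.mp this)

/-- If all the values are below 1/2, so is any product-weighted average. -/
theorem aux_avg {n : ℕ} {J : Type*} [Fintype J] [Nonempty J] (q : Fin n → PMFt J)
    (e : (Fin n → J) → ℝ) (he : ∀ j, e j < 1 / 2) :
    ∑ j : Fin n → J, (∏ i, (q i).1 (j i)) * e j < 1 / 2 := by
  obtain ⟨j₀, hj₀⟩ := Finite.exists_max e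
  have hw : ∑ j : Fin n → J, ∏ i, (q i).1 (j i) = 1 := by
    rw [← aux_prod_sum]
    exact Finset.prod_eq_one fun i _ => (q i).2.2
  calc ∑ j : Fin n → J, (∏ i, (q i).1 (j i)) * e j
      ≤ ∑ j : Fin n → J, (∏ i, (q i).1 (j i)) * e j₀ :=
        Finset.sum_le_sum fun j _ => mul_le_mul_of_nonneg_left (hj₀ j)
          (Finset.prod_nonneg fun i _ => (q i).2.1 _)
    _ = e j₀ := by rw [← Finset.sum_mul, hw, one_mul]
    _ < 1 / 2 := he j₀

/-- The averaged error in terms of the averaged channel. -/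
theorem aux_swap {n : ℕ} {S J Y : Type*} [Fintype S] [Fintype J] [Fintype Y]
    (Qs : S → ℝ) (V : Fin n → S → J → Y → ℝ) (q : Fin n → J → ℝ) (c : (Fin n → Y) → ℝ) :
    ∑ j : Fin n → J, (∏ i, q i (j i)) *
      (∑ y : Fin n → Y, ∑ s : Fin n → S,
        c y * ((∏ i, Qs (s i)) * ∏ i, V i (s i) (j i) (y i))) =
    ∑ y : Fin n → Y, c y * ∏ i, ∑ j, (∑ s, Qs s * V i s j (y i)) * q i j := by
  simp_rw [Finset.mul_sum]
  rw [Finset.sum_comm]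
  refine Finset.sum_congr rfl fun y _ => ?_
  rw [aux_prod_sum, Finset.mul_sum]
  refine Finset.sum_congr rfl fun j _ => ?_
  rw [Finset.prod_mul_distrib, aux_prod_sum, Finset.sum_mul, Finset.mul_sum]
  refine Finset.sum_congr rfl fun s _ => ?_
  rw [Finset.prod_mul_distrib]
  ring

/-- Lemma 2: if the graph of the averaged channel `Q_{Y|XJ}` is
complete-𝒳 (no pair of inputs is isolated), then every code with at least two messages
has maximal error probability at least `1/2`:
`max_{j^n,m} e(m,j^n) ≥ 1/2`. -/
theorem stmt9 {X S J Y : Type*}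
    [Fintype X] [Fintype S] [Fintype J] [Nonempty J] [Fintype Y]
    (W : X → S → J → Y → ℝ) (Qs : S → ℝ)
    (hW : ∀ x s j, IsPMF (W x s j)) (hQs : IsPMF Qs)
    -- the averaged channel Q_{Y|XJ}
    (Qbar : X → J → Y → ℝ) (hQbar : ∀ x j y, Qbar x j y = ∑ s, Qs s * W x s j y)
    -- the graph of Q_{Y|XJ} is complete-𝒳: no pair of inputs is isolated
    (hComplete : ∀ x₁ x₂ : X,
      ¬ (0 < ⨅ qq : PMFt J × PMFt J,
            ∑ y, |∑ j, Qbar x₁ j y * qq.1.1 j - ∑ j, Qbar x₂ j y * qq.2.1 j|))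
    -- an (n,R) code with at least two messages
    (n M : ℕ) (hM : 2 ≤ M)
    (xc : Fin M → Fin n → X) (g : (Fin n → Y) → Fin M) :
    ∃ (j : Fin n → J) (m : Fin M),
      (1 : ℝ) / 2 ≤
        ∑ y : Fin n → Y, ∑ s : Fin n → S,
          (if g y = m then 0 else 1) *
            ((∏ i, Qs (s i)) * ∏ i, W (xc m i) (s i) (j i) (y i)) := by
  by_contra hcon
  push Not at hcon
  let m₁ : Fin M := ⟨0, by omega⟩
  let m₂ : Fin M := ⟨1, by omega⟩
  have hm : m₁ ≠ m₂ := by simp [m₁, m₂]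
  have hex := fun i => aux_exists _ _ (hComplete (xc m₁ i) (xc m₂ i))
  choose q hq using hex
  have key₁ := aux_avg (fun i => (q i).1) _ (fun j => hcon j m₁)
  have key₂ := aux_avg (fun i => (q i).2) _ (fun j => hcon j m₂)
  rw [aux_swap Qs (fun i => W (xc m₁ i)) (fun i => (q i).1.1)
    (fun y => if g y = m₁ then 0 else 1)] at key₁
  rw [aux_swap Qs (fun i => W (xc m₂ i)) (fun i => (q i).2.1)
    (fun y => if g y = m₂ then 0 else 1)] at key₂
  simp_rw [← hQbar] at key₁ key₂
  simp_rw [← hq] at key₂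
  have hnn : ∀ x j y, 0 ≤ Qbar x j y := fun x j y => by
    rw [hQbar]
    exact Finset.sum_nonneg fun s _ => mul_nonneg (hQs.1 s) ((hW x s j).1 y)
  have hQ1 : ∀ x j, ∑ y, Qbar x j y = 1 := fun x j => by
    simp_rw [hQbar]
    rw [Finset.sum_comm]
    simp_rw [← Finset.mul_sum, (hW x _ j).2, mul_one]
    exact hQs.2
  have hP1 : ∑ y : Fin n → Y, ∏ i, ∑ j, Qbar (xc m₁ i) j (y i) * (q i).1.1 j = 1 := by
    rw [← aux_prod_sum (fun i y => ∑ j, Qbar (xc m₁ i) j y * (q i).1.1 j)]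
    refine Finset.prod_eq_one fun i _ => ?_
    rw [Finset.sum_comm]
    simp_rw [← Finset.sum_mul, hQ1, one_mul]
    exact (q i).1.2.2
  have hsum := add_lt_add key₁ key₂
  rw [← Finset.sum_add_distrib] at hsum
  have hge : (1 : ℝ) ≤ ∑ y : Fin n → Y,
      ((if g y = m₁ then (0 : ℝ) else 1) * ∏ i, ∑ j, Qbar (xc m₁ i) j (y i) * (q i).1.1 j +
       (if g y = m₂ then (0 : ℝ) else 1) * ∏ i, ∑ j, Qbar (xc m₁ i) j (y i) * (q i).1.1 j) := by
    refine hP1.symm.le.trans ?_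
    refine Finset.sum_le_sum fun y _ => ?_
    have hp : 0 ≤ ∏ i, ∑ j, Qbar (xc m₁ i) j (y i) * (q i).1.1 j :=
      Finset.prod_nonneg fun i _ => Finset.sum_nonneg fun j _ =>
        mul_nonneg (hnn _ _ _) ((q i).1.2.1 j)
    by_cases h1 : g y = m₁
    · have h2 : g y ≠ m₂ := fun h => hm (h1.symm.trans h)
      simp [h1, hm]
    · rw [if_neg h1, one_mul]
      refine le_add_of_nonneg_right (mul_nonneg ?_ hp)
      split_ifs <;> norm_num
  linarith

end
end

section
/- Let 𝒞 be a codebook of 2^{nR̃} codewords and 𝒞_G ⊆ 𝒞 its subset of good codewords, with |𝒞 ∖ 𝒞_G| ≤ 2^{−nδ}|𝒞| for some δ > 0. Let each codeword be assigned an independent uniformly random bin index in [1:2^{nR}] with R < R̃, set R' = R̃ − R, and let 𝒞(M) denote the bin of a message M. Then for suitable ε > 0 (with 2ε < δ) and all sufficiently large n, Pr{ |(𝒞 ∖ 𝒞_G) ∩ 𝒞(M)| ≤ 2^{−2nε} 2^{nR'} } ≥ 1 − χ_n, where χ_n is double-exponentially small in n. -/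
open scoped BigOperators

noncomputable section

/-- Exponential moment of the bin occupation number. -/
theorem aux_moment (N M : ℕ) (Bad : Finset (Fin N)) (m : Fin M) :
    ∑ b : Fin N → Fin M, (2 : ℝ) ^ (Nat.card {k : Fin N // k ∈ Bad ∧ b k = m}) =
      (M : ℝ) ^ N * (1 + 1 / (M : ℝ)) ^ Bad.card := by
  classical
  have hM : (M : ℝ) ≠ 0 := by
    have := m.pos
    positivity
  have h1 : ∀ b : Fin N → Fin M, (2 : ℝ) ^ (Nat.card {k : Fin N // k ∈ Bad ∧ b k = m}) =
      ∏ k, (if k ∈ Bad ∧ b k = m then (2 : ℝ) else 1) := by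
    intro b
    rw [Finset.prod_ite, Finset.prod_const, Finset.prod_const_one, mul_one,
      Nat.card_eq_fintype_card, Fintype.card_subtype]
  simp_rw [h1]
  rw [← Fintype.piFinset_univ,
    ← Finset.prod_univ_sum (fun _ : Fin N => (Finset.univ : Finset (Fin M)))
      (fun k j => if k ∈ Bad ∧ j = m then (2 : ℝ) else 1)]
  have h2 : ∀ k : Fin N, (∑ j : Fin M, if k ∈ Bad ∧ j = m then (2 : ℝ) else 1) =
      (M : ℝ) * (if k ∈ Bad then 1 + 1 / (M : ℝ) else 1) := by
    intro k
    by_cases hk : k ∈ Bad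
    · have : ∀ j : Fin M, (if k ∈ Bad ∧ j = m then (2 : ℝ) else 1) =
          1 + (if j = m then 1 else 0) := by
        intro j
        by_cases hj : j = m
        · simp [hk, hj]; norm_num
        · simp [hj]
      simp_rw [this]
      rw [Finset.sum_add_distrib]
      simp [hk]
      field_simp
    · simp [hk]
  simp_rw [h2]
  rw [Finset.prod_mul_distrib]
  simp [Finset.prod_ite]

/-- Chernoff bound in counting form. -/
theorem aux_chernoff (N M : ℕ) (Bad : Finset (Fin N)) (m : Fin M) (T : ℝ) :
    1 - (2 : ℝ) ^ (2 * ((Bad.card : ℝ) / M) - T) ≤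
      (Nat.card {b : Fin N → Fin M //
        (Nat.card {k : Fin N // k ∈ Bad ∧ b k = m} : ℝ) ≤ T} : ℝ) /
        (Nat.card (Fin N → Fin M) : ℝ) := by
  classical
  have hM : (0 : ℝ) < M := by
    have := m.pos
    exact_mod_cast this
  have hMN : (0 : ℝ) < (M : ℝ) ^ N := by positivity
  have hc : (Nat.card (Fin N → Fin M) : ℝ) = (M : ℝ) ^ N := by simp
  rw [hc, le_div_iff₀ hMN]
  set X : (Fin N → Fin M) → ℕ := fun b => Nat.card {k : Fin N // k ∈ Bad ∧ b k = m} with hX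
  have hg : (Nat.card {b : Fin N → Fin M // (X b : ℝ) ≤ T} : ℝ) =
      ∑ b : Fin N → Fin M, if (X b : ℝ) ≤ T then (1 : ℝ) else 0 := by
    rw [Nat.card_eq_fintype_card, Fintype.card_subtype]
    simp
  have hpt : ∀ b : Fin N → Fin M,
      1 - (2 : ℝ) ^ (X b) * (2 : ℝ) ^ (-T) ≤ if (X b : ℝ) ≤ T then (1 : ℝ) else 0 := by
    intro b
    split_ifs with h
    · have : (0 : ℝ) < (2 : ℝ) ^ (X b) * (2 : ℝ) ^ (-T) := by positivity
      linarith
    · have h3 : (1 : ℝ) ≤ (2 : ℝ) ^ (X b) * (2 : ℝ) ^ (-T) := by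
        rw [← Real.rpow_natCast, ← Real.rpow_add (by norm_num)]
        apply Real.one_le_rpow (by norm_num)
        push Not at h
        linarith
      linarith
  have hsum := Finset.sum_le_sum (fun b (_ : b ∈ Finset.univ) => hpt b)
  rw [Finset.sum_sub_distrib, ← Finset.sum_mul, aux_moment] at hsum
  have hone : ∑ _b : Fin N → Fin M, (1 : ℝ) = (M : ℝ) ^ N := by simp
  rw [hone] at hsum
  have hb : (1 + 1 / (M : ℝ)) ^ Bad.card ≤ (2 : ℝ) ^ (2 * ((Bad.card : ℝ) / M)) := by
    have e1 : 1 + 1 / (M : ℝ) ≤ (2 : ℝ) ^ (2 * (1 / (M : ℝ))) := by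
      have := Real.add_one_le_exp (1 / (M : ℝ))
      have h4 : Real.exp (1 / (M : ℝ)) ≤ (2 : ℝ) ^ (2 * (1 / (M : ℝ))) := by
        rw [Real.rpow_def_of_pos (by norm_num)]
        apply Real.exp_le_exp.mpr
        have := Real.log_two_gt_d9
        have h5 : 0 < 1 / (M : ℝ) := by positivity
        nlinarith
      linarith
    calc (1 + 1 / (M : ℝ)) ^ Bad.card ≤ ((2 : ℝ) ^ (2 * (1 / (M : ℝ)))) ^ Bad.card := by
          gcongr
      _ = _ := by
          rw [← Real.rpow_natCast, ← Real.rpow_mul (by norm_num)]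
          congr 1
          ring
  change _ ≤ (Nat.card {b : Fin N → Fin M // (X b : ℝ) ≤ T} : ℝ)
  rw [hg]
  refine le_trans ?_ hsum
  rw [sub_eq_add_neg (2 * _) T, Real.rpow_add (by norm_num)]
  have h6 : (0 : ℝ) < (2 : ℝ) ^ (-T) := by positivity
  have := mul_le_mul_of_nonneg_left (mul_le_mul_of_nonneg_right hb h6.le) hMN.le
  linarith

/-- Lemma 11: few bad codewords per bin. If a codebook of `2^{nR̃}`
codewords containing at most a `2^{−nδ}` fraction of bad codewords is independently and
uniformly binned into `2^{nR}` bins (`R < R̃`, `R' = R̃ − R`), then for suitable `ε > 0`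
with `2ε < δ` and all sufficiently large `n`, each bin contains at most
`2^{−2nε} 2^{nR'}` bad codewords except with double-exponentially small probability. -/
theorem stmt15 (Rt R δ : ℝ) (hR : 0 < R) (hRt : R < Rt) (hδ : 0 < δ) :
    ∃ ε : ℝ, 0 < ε ∧ 2 * ε < δ ∧
      ∃ c : ℝ, 0 < c ∧ ∃ N₀ : ℕ, ∀ n : ℕ, N₀ ≤ n →
        ∀ (Nc Mb : ℕ), (Nc : ℝ) = (2 : ℝ) ^ ((n : ℝ) * Rt) →
          (Mb : ℝ) = (2 : ℝ) ^ ((n : ℝ) * R) →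
          -- `Bad` is the set of bad codewords, an exponentially small fraction
          ∀ Bad : Finset (Fin Nc), (Bad.card : ℝ) ≤ (2 : ℝ) ^ (-(n : ℝ) * δ) * (Nc : ℝ) →
          ∀ m : Fin Mb,
            1 - (2 : ℝ) ^ (-(2 : ℝ) ^ (c * (n : ℝ))) ≤
              (Nat.card {b : Fin Nc → Fin Mb //
                  (Nat.card {k : Fin Nc // k ∈ Bad ∧ b k = m} : ℝ) ≤
                    (2 : ℝ) ^ (-2 * (n : ℝ) * ε) * (2 : ℝ) ^ ((n : ℝ) * (Rt - R))} : ℝ) /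
                (Nat.card (Fin Nc → Fin Mb) : ℝ) := by
  set e : ℝ := min δ (Rt - R) / 4 with he
  have hm : 0 < min δ (Rt - R) := lt_min hδ (by linarith)
  have h1 : min δ (Rt - R) ≤ δ := min_le_left _ _
  have h2 : min δ (Rt - R) ≤ Rt - R := min_le_right _ _
  have he0 : 0 < e := by positivity
  have hc : 0 < (Rt - R - 2 * e) / 2 := by linarith
  have hd : 0 < δ - 2 * e := by linarith
  refine ⟨e, he0, by linarith, (Rt - R - 2 * e) / 2, hc, ?_⟩
  set c : ℝ := (Rt - R - 2 * e) / 2 with hcdef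
  obtain ⟨N₀, hN⟩ := exists_nat_ge (max (1 / c) (2 / (δ - 2 * e)))
  refine ⟨N₀, fun n hn Nc Mb hNc hMb Bad hBad m => ?_⟩
  have hn' : (N₀ : ℝ) ≤ n := by exact_mod_cast hn
  have hn1 : 1 ≤ n * c := by
    rw [← div_le_iff₀ hc]; exact (le_max_left _ _).trans (hN.trans hn')
  have hn2 : 2 ≤ n * (δ - 2 * e) := by
    rw [← div_le_iff₀ hd]; exact (le_max_right _ _).trans (hN.trans hn')
  refine le_trans ?_ (aux_chernoff Nc Mb Bad m _)
  have key : 2 * ((Bad.card : ℝ) / Mb) -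
      (2 : ℝ) ^ (-2 * (n : ℝ) * e) * (2 : ℝ) ^ ((n : ℝ) * (Rt - R)) ≤
      -(2 : ℝ) ^ (c * (n : ℝ)) := by
    have hMpos : (0 : ℝ) < Mb := by rw [hMb]; positivity
    have hT : (2 : ℝ) ^ (-2 * (n : ℝ) * e) * (2 : ℝ) ^ ((n : ℝ) * (Rt - R)) =
        (2 : ℝ) ^ (c * (n : ℝ)) * (2 : ℝ) ^ (c * (n : ℝ)) := by
      rw [← Real.rpow_add (by norm_num), ← Real.rpow_add (by norm_num)]
      congr 1
      rw [hcdef]; ring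
    have hmu : (Bad.card : ℝ) / Mb ≤
        (2 : ℝ) ^ (c * (n : ℝ)) * (2 : ℝ) ^ (c * (n : ℝ)) / 4 := by
      have h4 : (4 : ℝ) = (2 : ℝ) ^ (2 : ℝ) := by norm_num
      rw [div_le_iff₀ hMpos]
      refine hBad.trans ?_
      rw [hNc, hMb, h4, ← Real.rpow_add (by norm_num), ← Real.rpow_add (by norm_num),
        ← Real.rpow_sub (by norm_num), ← Real.rpow_add (by norm_num)]
      apply Real.rpow_le_rpow_of_exponent_le (by norm_num)
      rw [hcdef]
      nlinarith
    have hge : (2 : ℝ) ≤ (2 : ℝ) ^ (c * (n : ℝ)) := by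
      calc (2 : ℝ) = (2 : ℝ) ^ (1 : ℝ) := by norm_num
        _ ≤ _ := Real.rpow_le_rpow_of_exponent_le (by norm_num) (by linarith)
    rw [hT]
    nlinarith
  have := Real.rpow_le_rpow_of_exponent_le (by norm_num : (1 : ℝ) ≤ 2) key
  linarith

end
end
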